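/- arXiv:2409.13161 — 3 statements merged into one kernel-verified Lean document; each statement's English description precedes it below -/
import Mathlib

section
/- For every integer q ≥ 3, the graph MEbarStar_q (obtained from MEbar_q by adding the edge u_0 u_{q+1}) is C4-free. -/
/-- A graph is `C₄`-free if it has no induced subgraph isomorphic to the 4-cycle. -/
def C4Free {V : Type*} (G : SimpleGraph V) : Prop :=
  ¬ ∃ a b c d : V, a ≠ c ∧ b ≠ d ∧ G.Adj a b ∧ G.Adj b c ∧ G.Adj c d ∧ G.Adj d a ∧
      ¬ G.Adj a c ∧ ¬ G.Adj b d

/-- The graph `MEbar_q`.  The vertices `0, 1, …, q+1` of `Fin (4q+2)` are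
`u_0, …, u_{q+1}` and, for `1 ≤ i ≤ q`, the vertices `q+3i-1, q+3i, q+3i+1` are
`v_{i1}, v_{i2}, v_{i3}`; listed in this order the vertices form a Hamiltonian cycle,
and the extra edges are `u_i v_{i2}` and `v_{i1} v_{i3}` for `1 ≤ i ≤ q`. -/
def MEbar (q : ℕ) : SimpleGraph (Fin (4*q+2)) :=
  SimpleGraph.fromRel (fun a b =>
    b.val = a.val + 1 ∨ (a.val = 0 ∧ b.val = 4*q+1) ∨
    (∃ i, 1 ≤ i ∧ i ≤ q ∧ a.val = i ∧ b.val = q + 3*i) ∨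
    (∃ i, 1 ≤ i ∧ i ≤ q ∧ a.val = q + 3*i - 1 ∧ b.val = q + 3*i + 1))

/-- `MEbarStar_q` is `MEbar_q` together with the edge `u_0 u_{q+1}`. -/
def MEbarStar (q : ℕ) : SimpleGraph (Fin (4*q+2)) :=
  MEbar q ⊔ SimpleGraph.fromRel (fun a b => a.val = 0 ∧ b.val = q+1)

/-- Upward adjacency on naturals. -/
def Lw (q x y : ℕ) : Prop :=
  y = x + 1 ∨ (x = 0 ∧ y = 4*q+1) ∨ (1 ≤ x ∧ x ≤ q ∧ y = q + 3*x) ∨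
  (∃ i, 1 ≤ i ∧ i ≤ q ∧ x + 1 = q + 3*i ∧ y = x + 2) ∨ (x = 0 ∧ y = q+1)

theorem Lw_lt {q x y : ℕ} (hq : 3 ≤ q) (h : Lw q x y) : x < y := by
  rcases h with h | h | h | ⟨i, h⟩ | h <;> omega

theorem adj_iff {q : ℕ} (hq : 3 ≤ q) (a b : Fin (4*q+2)) :
    (MEbarStar q).Adj a b ↔ (Lw q a.val b.val ∨ Lw q b.val a.val) := by
  have key : ∀ x y : Fin (4*q+2), ((y.val = x.val + 1 ∨ (x.val = 0 ∧ y.val = 4*q+1) ∨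
    (∃ i, 1 ≤ i ∧ i ≤ q ∧ x.val = i ∧ y.val = q + 3*i) ∨
    (∃ i, 1 ≤ i ∧ i ≤ q ∧ x.val = q + 3*i - 1 ∧ y.val = q + 3*i + 1)) ∨
     (x.val = 0 ∧ y.val = q+1)) ↔ Lw q x.val y.val := by
    intro x y
    constructor
    · rintro ((h | h | ⟨i, h⟩ | ⟨i, h⟩) | h)
      · exact Or.inl h
      · exact Or.inr (Or.inl h)
      · exact Or.inr (Or.inr (Or.inl (by omega)))
      · exact Or.inr (Or.inr (Or.inr (Or.inl ⟨i, by omega⟩)))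
      · exact Or.inr (Or.inr (Or.inr (Or.inr h)))
    · rintro (h | h | h | ⟨i, h⟩ | h)
      · exact Or.inl (Or.inl h)
      · exact Or.inl (Or.inr (Or.inl h))
      · exact Or.inl (Or.inr (Or.inr (Or.inl ⟨x.val, by omega⟩)))
      · exact Or.inl (Or.inr (Or.inr (Or.inr ⟨i, by omega⟩)))
      · exact Or.inr h
  rw [← key a b, ← key b a]
  have hne : (Lw q a.val b.val ∨ Lw q b.val a.val) → a ≠ b := by
    rintro (h | h) rfl <;> exact absurd (Lw_lt hq h) (lt_irrefl _)
  rw [← key a b, ← key b a] at hne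
  simp only [MEbarStar, MEbar, SimpleGraph.sup_adj, SimpleGraph.fromRel_adj]
  constructor
  · rintro (⟨_, h | h⟩ | ⟨_, h | h⟩)
    · exact Or.inl (Or.inl h)
    · exact Or.inr (Or.inl h)
    · exact Or.inl (Or.inr h)
    · exact Or.inr (Or.inr h)
  · intro h
    have hn := hne h
    rcases h with (h | h) | (h | h)
    · exact Or.inl ⟨hn, Or.inl h⟩
    · exact Or.inr ⟨hn, Or.inl h⟩
    · exact Or.inl ⟨hn, Or.inr h⟩
    · exact Or.inr ⟨hn, Or.inr h⟩

/-- Possible pairs of lower neighbours. -/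
theorem pairs {q a b d : ℕ} (hq : 3 ≤ q) (ha : a < 4*q+2) (hb : Lw q b a) (hd : Lw q d a)
    (hbd : b < d) (hn : ¬ Lw q b d) :
    (b = 0 ∧ d = q ∧ a = q+1) ∨ (1 ≤ b ∧ b ≤ q ∧ a = q + 3*b ∧ d + 1 = a) ∨
    (b = 0 ∧ a = 4*q+1 ∧ (d = 4*q ∨ d = 4*q-1)) := by
  have hn1 : d ≠ b + 1 := fun h => hn (Or.inl h)
  rcases hb with h | h | h | ⟨i, h⟩ | h <;> rcases hd with h' | h' | h' | ⟨j, h'⟩ | h' <;> omega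

theorem core {q a b c d : ℕ} (hq : 3 ≤ q) (ha : a < 4*q+2) (hb : Lw q b a) (hd : Lw q d a)
    (hbd : b < d) (hn : ¬ Lw q b d) (hca : c < a)
    (h1 : Lw q b c ∨ Lw q c b) (h2 : Lw q d c ∨ Lw q c d) : False := by
  have h3 : (c < d ∧ Lw q c d) ∨ (d < c ∧ Lw q d c) := by
    rcases h2 with h | h
    · exact Or.inr ⟨Lw_lt hq h, h⟩
    · exact Or.inl ⟨Lw_lt hq h, h⟩
  have h4 : (c < b ∧ Lw q c b) ∨ (b < c ∧ Lw q b c) := by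
    rcases h1 with h | h
    · exact Or.inr ⟨Lw_lt hq h, h⟩
    · exact Or.inl ⟨Lw_lt hq h, h⟩
  clear h1 h2
  rcases pairs hq ha hb hd hbd hn with h | h | h <;> clear hb hd hn <;>
  rcases h3 with ⟨l, h3⟩ | ⟨l, h3⟩ <;> rcases h4 with ⟨l', h4⟩ | ⟨l', h4⟩ <;> try omega
  all_goals
    rcases h3 with h3 | h3 | h3 | ⟨i, h3⟩ | h3 <;> try omega
  all_goals
    rcases h4 with h4 | h4 | h4 | ⟨j, h4⟩ | h4 <;> omega

theorem maxcase {q a b c d : ℕ} (hq : 3 ≤ q) (ha : a < 4*q+2) (hbd : b ≠ d) (hac : a ≠ c)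
    (mb : b ≤ a) (mc : c ≤ a) (md : d ≤ a)
    (h1 : Lw q a b ∨ Lw q b a) (h2 : Lw q b c ∨ Lw q c b) (h3 : Lw q c d ∨ Lw q d c)
    (h4 : Lw q d a ∨ Lw q a d) (hn : ¬ (Lw q b d ∨ Lw q d b)) : False := by
  have hb : Lw q b a := h1.resolve_left fun h => by have := Lw_lt hq h; omega
  have hd : Lw q d a := h4.resolve_right fun h => by have := Lw_lt hq h; omega
  rcases lt_or_gt_of_ne hbd with h | h
  · exact core hq ha hb hd h (fun k => hn (Or.inl k)) (by omega) h2 h3.symm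
  · exact core hq ha hd hb h (fun k => hn (Or.inr k)) (by omega) h3.symm h2

/-- for every `q ≥ 3`, the graph `MEbarStar_q` is `C₄`-free. -/
theorem stmt10 : ∀ q : ℕ, 3 ≤ q → C4Free (MEbarStar q) := by
  rintro q hq ⟨a, b, c, d, hac, hbd, h1, h2, h3, h4, h5, h6⟩
  rw [adj_iff hq] at h1 h2 h3 h4 h5 h6
  have hac' : a.val ≠ c.val := fun h => hac (Fin.ext h)
  have hbd' : b.val ≠ d.val := fun h => hbd (Fin.ext h)
  have hm : (b.val ≤ a.val ∧ c.val ≤ a.val ∧ d.val ≤ a.val) ∨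
    (c.val ≤ b.val ∧ d.val ≤ b.val ∧ a.val ≤ b.val) ∨
    (d.val ≤ c.val ∧ a.val ≤ c.val ∧ b.val ≤ c.val) ∨
    (a.val ≤ d.val ∧ b.val ≤ d.val ∧ c.val ≤ d.val) := by omega
  rcases hm with ⟨x, y, z⟩ | ⟨x, y, z⟩ | ⟨x, y, z⟩ | ⟨x, y, z⟩
  · exact maxcase hq a.isLt hbd' hac' x y z h1 h2 h3 h4 h6
  · exact maxcase hq b.isLt hac'.symm hbd' x y z h2 h3 h4 h1 (fun k => h5 k.symm)
  · exact maxcase hq c.isLt hbd'.symm hac'.symm x y z h3 h4 h1 h2 (fun k => h6 k.symm)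
  · exact maxcase hq d.isLt hac' hbd'.symm x y z h4 h1 h2 h3 h5
end

section
/- For every integer q ≥ 2, the clique partition number and the independence number of KMbar_q are equal, and θ(KMbar_q) = α(KMbar_q) = 2q. -/
/-- `f` describes a partition of the vertices of `G` into at most `k` cliques:
each fibre of `f` is a clique. -/
def IsCliquePartition {V : Type*} (G : SimpleGraph V) {k : ℕ} (f : V → Fin k) : Prop :=
  ∀ a b : V, f a = f b → a ≠ b → G.Adj a b

/-- A clique partition is frozen if every vertex has a non-neighbour in each clique
of the partition other than the clique containing it. -/
def IsFrozenCliquePartition {V : Type*} (G : SimpleGraph V) {k : ℕ} (f : V → Fin k) : Prop :=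
  IsCliquePartition G f ∧ ∀ (v : V) (j : Fin k), j ≠ f v → ∃ w : V, f w = j ∧ ¬ G.Adj v w

/-- The clique partition number `θ(G)`: the least `k` such that the vertices of `G`
can be partitioned into at most `k` cliques. -/
noncomputable def cliquePartNum {V : Type*} (G : SimpleGraph V) : ℕ :=
  sInf {k : ℕ | ∃ f : V → Fin k, IsCliquePartition G f}

/-- The independence number `α(G)`: the maximum size of an independent set of `G`. -/
noncomputable def indepNum {V : Type*} (G : SimpleGraph V) : ℕ :=
  sSup {n : ℕ | ∃ s : Finset V, s.card = n ∧ ∀ a ∈ s, ∀ b ∈ s, a ≠ b → ¬ G.Adj a b}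

/-- `KMbar_q` is `MEbar_q` with the edges `u_1u_2, u_2u_3, …, u_{q-1}u_q` deleted. -/
def KMbar (q : ℕ) : SimpleGraph (Fin (4*q+2)) :=
  MEbar q \ SimpleGraph.fromRel (fun a b => ∃ i, 1 ≤ i ∧ i ≤ q - 1 ∧ a.val = i ∧ b.val = i+1)

theorem indep_le_part {V : Type*} (G : SimpleGraph V) {k : ℕ} (f : V → Fin k)
    (hf : IsCliquePartition G f) (s : Finset V)
    (hs : ∀ a ∈ s, ∀ b ∈ s, a ≠ b → ¬ G.Adj a b) : s.card ≤ k := by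
  have h := Finset.card_le_card_of_injOn (s := s) (t := Finset.univ) f (by simp) (by
    intro a ha b hb hab
    by_contra hne
    exact hs a ha b hb hne (hf a b hab hne))
  simpa using h

def partN (q a : ℕ) : ℕ :=
  if a = 0 then 0 else if a ≤ q then a - 1 else if a = q + 1 then q - 1
  else if (a - q - 2) % 3 = 1 ∧ 0 < (a - q - 2) / 3 ∧ (a - q - 2) / 3 < q - 1
    then (a - q - 2) / 3 else q + (a - q - 2) / 3

theorem partN_lt (q a : ℕ) (hq : 2 ≤ q) (ha : a < 4 * q + 2) : partN q a < 2 * q := by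
  unfold partN; split_ifs <;> omega

theorem KM_adj (q : ℕ) (a b : Fin (4*q+2)) (h : a.val < b.val)
    (h1 : (b.val = a.val + 1 ∧ ¬ (1 ≤ a.val ∧ a.val ≤ q - 1)) ∨
      (1 ≤ a.val ∧ a.val ≤ q ∧ b.val = q + 3 * a.val) ∨
      (∃ i, 1 ≤ i ∧ i ≤ q ∧ a.val = q + 3*i - 1 ∧ b.val = q + 3*i + 1)) :
    (KMbar q).Adj a b := by
  have hne : a ≠ b := by rintro rfl; omega
  simp only [KMbar, MEbar, SimpleGraph.sdiff_adj, SimpleGraph.fromRel_adj]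
  refine ⟨⟨hne, Or.inl ?_⟩, ?_⟩
  · rcases h1 with h1 | h1 | h1
    · exact Or.inl h1.1
    · exact Or.inr (Or.inr (Or.inl ⟨a.val, h1.1, h1.2.1, rfl, h1.2.2⟩))
    · exact Or.inr (Or.inr (Or.inr h1))
  · rintro ⟨-, ⟨i, hi⟩ | ⟨i, hi⟩⟩
    · rcases h1 with h1 | h1 | ⟨j, h1⟩ <;> omega
    · omega

theorem KM_part (q : ℕ) (hq : 2 ≤ q) :
    IsCliquePartition (KMbar q) (fun a : Fin (4*q+2) =>
      (⟨partN q a.val, partN_lt q a.val hq a.isLt⟩ : Fin (2*q))) := by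
  have key : ∀ a b : Fin (4*q+2), partN q a.val = partN q b.val → a.val < b.val →
      (KMbar q).Adj a b := by
    intro a b hab hlt
    apply KM_adj q a b hlt
    have ha := a.isLt
    have hb := b.isLt
    by_cases h1 : b.val = a.val + 1
    · left
      refine ⟨h1, ?_⟩
      rintro ⟨h2, h3⟩
      unfold partN at hab
      split_ifs at hab <;> omega
    · right
      by_cases h2 : a.val ≤ q + 1
      · left
        unfold partN at hab
        split_ifs at hab <;> omega
      · right
        refine ⟨(a.val - q - 2) / 3 + 1, ?_⟩
        unfold partN at hab
        split_ifs at hab <;> omega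
  intro a b hab hne
  have hab' : partN q a.val = partN q b.val := by simpa using hab
  rcases Nat.lt_or_gt_of_ne (fun h => hne (Fin.ext h)) with h | h
  · exact key a b hab' h
  · exact (key b a hab'.symm h).symm

def indN (q k : ℕ) : ℕ := if k < q then k + 1 else q + 2 + 3 * (k - q)

theorem indN_lt (q k : ℕ) (hk : k < 2 * q) : indN q k < 4 * q + 2 := by
  unfold indN; split_ifs <;> omega

theorem KM_indep (q : ℕ) : ∃ s : Finset (Fin (4*q+2)), s.card = 2*q ∧
    ∀ a ∈ s, ∀ b ∈ s, a ≠ b → ¬ (KMbar q).Adj a b := by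
  let g : Fin (2*q) → Fin (4*q+2) := fun k => ⟨indN q k.val, indN_lt q k.val k.isLt⟩
  have hg : Function.Injective g := by
    intro x y hxy
    have h : indN q x.val = indN q y.val := by simpa [g] using hxy
    apply Fin.ext
    unfold indN at h
    split_ifs at h <;> omega
  refine ⟨Finset.univ.image g, by simp [Finset.card_image_of_injective _ hg], ?_⟩
  intro a ha b hb hne hadj
  simp only [Finset.mem_image, Finset.mem_univ, true_and] at ha hb
  obtain ⟨x, rfl⟩ := ha
  obtain ⟨y, rfl⟩ := hb
  simp only [KMbar, MEbar, SimpleGraph.sdiff_adj, SimpleGraph.fromRel_adj] at hadj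
  obtain ⟨⟨-, h1⟩, h2⟩ := hadj
  have key : ∀ x y : Fin (2*q),
      ¬ (∃ i, 1 ≤ i ∧ i ≤ q - 1 ∧ (g x).val = i ∧ (g y).val = i+1) →
      ((g y).val = (g x).val + 1 ∨ ((g x).val = 0 ∧ (g y).val = 4*q+1) ∨
      (∃ i, 1 ≤ i ∧ i ≤ q ∧ (g x).val = i ∧ (g y).val = q + 3*i) ∨
      (∃ i, 1 ≤ i ∧ i ≤ q ∧ (g x).val = q + 3*i - 1 ∧ (g y).val = q + 3*i + 1)) → False := by
    intro x y h2 h1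
    have hx := x.isLt
    have hy := y.isLt
    have h3 : ¬ (1 ≤ (g x).val ∧ (g x).val ≤ q - 1 ∧ (g y).val = (g x).val + 1) :=
      fun h => h2 ⟨_, h.1, h.2.1, rfl, h.2.2⟩
    clear h2
    simp only [g, indN] at h1 h3
    rcases h1 with h1 | h1 | ⟨i, h1⟩ | ⟨i, h1⟩ <;> split_ifs at h1 h3 <;> omega
  rcases h1 with h1 | h1
  · exact key x y (fun h => h2 ⟨hne, Or.inl h⟩) h1
  · exact key y x (fun h => h2 ⟨hne, Or.inr h⟩) h1

/-- for every `q ≥ 2`, `θ(KMbar_q) = α(KMbar_q) = 2q`. -/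
theorem stmt14 : ∀ q : ℕ, 2 ≤ q →
    cliquePartNum (KMbar q) = 2*q ∧ indepNum (KMbar q) = 2*q := by
  intro q hq
  have hp := KM_part q hq
  obtain ⟨s, hsc, hs⟩ := KM_indep q
  constructor
  · apply le_antisymm
    · exact Nat.sInf_le ⟨_, hp⟩
    · refine le_csInf (s := {k : ℕ | ∃ f : Fin (4*q+2) → Fin k, IsCliquePartition (KMbar q) f}) ⟨_, _, hp⟩ ?_
      rintro k ⟨f, hf⟩
      rw [← hsc]
      exact indep_le_part _ f hf s hs
  · have hub : ∀ n ∈ {n : ℕ | ∃ s : Finset (Fin (4*q+2)), s.card = n ∧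
        ∀ a ∈ s, ∀ b ∈ s, a ≠ b → ¬ (KMbar q).Adj a b}, n ≤ 2*q := by
      rintro n ⟨t, rfl, ht⟩
      exact indep_le_part _ _ hp t ht
    apply le_antisymm
    · exact csSup_le ⟨_, s, hsc, hs⟩ hub
    · exact le_csSup ⟨_, hub⟩ ⟨s, hsc, hs⟩
end

section
/- For every integer q ≥ 2, the graph KM_q (the complement of KMbar_q) is a 2q-chromatic 2K2-free graph which admits a frozen (2q+1)-colouring. -/
/-- A graph is `2K₂`-free if it has no induced subgraph isomorphic to `2K₂`
(two vertex-disjoint edges with no edges between them). -/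
def TwoK2Free {V : Type*} (G : SimpleGraph V) : Prop :=
  ¬ ∃ a b c d : V, G.Adj a b ∧ G.Adj c d ∧
      ¬ G.Adj a c ∧ ¬ G.Adj a d ∧ ¬ G.Adj b c ∧ ¬ G.Adj b d

/-- A colouring is frozen if every vertex has a neighbour in each colour class
other than its own. -/
def IsFrozenColoring {V : Type*} (G : SimpleGraph V) {k : ℕ} (C : G.Coloring (Fin k)) : Prop :=
  ∀ (v : V) (j : Fin k), j ≠ C v → ∃ w : V, G.Adj v w ∧ C w = j

def RR (q a b : ℕ) : Prop :=
  (b = a + 1 ∧ ¬ (1 ≤ a ∧ a + 1 ≤ q)) ∨ (a = 0 ∧ b = 4*q+1) ∨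
  (1 ≤ a ∧ a ≤ q ∧ b = q + 3*a) ∨ (q + 2 ≤ a ∧ b = a + 2 ∧ (a - q) % 3 = 2 ∧ b ≤ 4*q+1)

theorem ME_rel (q a b : ℕ) (hq : 2 ≤ q) (hb : b < 4*q+2) :
    ((b = a + 1 ∨ (a = 0 ∧ b = 4*q+1) ∨
    (∃ i, 1 ≤ i ∧ i ≤ q ∧ a = i ∧ b = q + 3*i) ∨
    (∃ i, 1 ≤ i ∧ i ≤ q ∧ a = q + 3*i - 1 ∧ b = q + 3*i + 1)) ∧
    ¬ (∃ i, 1 ≤ i ∧ i ≤ q - 1 ∧ a = i ∧ b = i+1)) ↔ RR q a b := by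
  unfold RR
  constructor
  · rintro ⟨h, h2⟩
    have h3 : ¬ (1 ≤ a ∧ a ≤ q - 1 ∧ b = a + 1) := fun h => h2 ⟨a, h.1, h.2.1, rfl, h.2.2⟩
    rcases h with h | h | ⟨i, h⟩ | ⟨i, h⟩
    · left; omega
    · right; left; omega
    · right; right; left; omega
    · right; right; right; omega
  · intro h
    refine ⟨?_, ?_⟩
    · rcases h with h | h | h | h
      · left; omega
      · right; left; omega
      · right; right; left; exact ⟨a, by omega⟩
      · right; right; right; exact ⟨(a + 1 - q) / 3, by omega⟩
    · rintro ⟨i, hi⟩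
      omega

theorem KM_adj_s15 (q : ℕ) (hq : 2 ≤ q) (a b : Fin (4*q+2)) :
    (KMbar q).Adj a b ↔ RR q a b ∨ RR q b a := by
  rw [← ME_rel q a b hq b.2, ← ME_rel q b a hq a.2]
  simp only [KMbar, MEbar, SimpleGraph.sdiff_adj, SimpleGraph.fromRel_adj]
  constructor
  · rintro ⟨⟨h0, h | h⟩, h2⟩
    · left; exact ⟨h, fun h3 => h2 ⟨h0, Or.inl h3⟩⟩
    · right; exact ⟨h, fun h3 => h2 ⟨h0, Or.inr h3⟩⟩
  · intro h
    have h0 : a ≠ b := by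
      rintro rfl
      have := (ME_rel q a a hq a.2).1 (or_self_iff.1 h)
      unfold RR at this
      omega
    rcases h with h | h
    · refine ⟨⟨h0, Or.inl h.1⟩, ?_⟩
      rintro ⟨-, h3 | h3⟩
      · exact h.2 h3
      · have := (ME_rel q a b hq b.2).1 h
        obtain ⟨i, hi⟩ := h3
        unfold RR at this
        omega
    · refine ⟨⟨h0, Or.inr h.1⟩, ?_⟩
      rintro ⟨-, h3 | h3⟩
      · have := (ME_rel q b a hq a.2).1 h
        obtain ⟨i, hi⟩ := h3
        unfold RR at this
        omega
      · exact h.2 h3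

theorem KMc_adj (q : ℕ) (hq : 2 ≤ q) (a b : Fin (4*q+2)) :
    (KMbar q)ᶜ.Adj a b ↔ a.val ≠ b.val ∧ ¬ (RR q a b ∨ RR q b a) := by
  rw [SimpleGraph.compl_adj, KM_adj_s15 q hq, Ne, Fin.ext_iff]

theorem RR_lt {q a b : ℕ} (hq : 2 ≤ q) (h : RR q a b) : a < b := by
  unfold RR at h; omega

theorem C4_aux (q a b c d : ℕ) (hq : 2 ≤ q)
    (hb : b < 4*q+2) (hc : c < 4*q+2) (hd : d < 4*q+2)
    (hab : a < b) (hcd : c < d)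
    (h1 : RR q a c) (h2 : RR q a d)
    (h3 : RR q b c ∨ RR q c b) (h4 : RR q b d ∨ RR q d b) (h6 : ¬ RR q c d) : False := by
  unfold RR at *
  rcases h1 with h1 | h1 | h1 | h1 <;> rcases h2 with h2 | h2 | h2 | h2 <;> try omega

theorem C4_aux2 (q a b c d : ℕ) (hq : 2 ≤ q)
    (hb : b < 4*q+2) (hc : c < 4*q+2) (hd : d < 4*q+2)
    (hab : a < b) (hac : a ≤ c) (had : a ≤ d) (hcd : c ≠ d)
    (h1 : RR q a c ∨ RR q c a) (h2 : RR q a d ∨ RR q d a)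
    (h3 : RR q b c ∨ RR q c b) (h4 : RR q b d ∨ RR q d b)
    (h6 : ¬ (RR q c d ∨ RR q d c)) : False := by
  have h1' : RR q a c := h1.resolve_right fun h => by have := RR_lt hq h; omega
  have h2' : RR q a d := h2.resolve_right fun h => by have := RR_lt hq h; omega
  rcases lt_or_gt_of_ne hcd with h | h
  · exact C4_aux q a b c d hq hb hc hd hab h h1' h2' h3 h4 (by tauto)
  · exact C4_aux q a b d c hq hb hd hc hab h h2' h1' h4 h3 (by tauto)

theorem C4_free (q a b c d : ℕ) (hq : 2 ≤ q) (ha : a < 4*q+2)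
    (hb : b < 4*q+2) (hc : c < 4*q+2) (hd : d < 4*q+2)
    (hab : a ≠ b) (hcd : c ≠ d)
    (h1 : RR q a c ∨ RR q c a) (h2 : RR q a d ∨ RR q d a)
    (h3 : RR q b c ∨ RR q c b) (h4 : RR q b d ∨ RR q d b)
    (h5 : ¬ (RR q a b ∨ RR q b a))
    (h6 : ¬ (RR q c d ∨ RR q d c)) : False := by
  have : (a < b ∧ a ≤ c ∧ a ≤ d) ∨ (b < a ∧ b ≤ c ∧ b ≤ d) ∨ (c < d ∧ c ≤ a ∧ c ≤ b) ∨
    (d < c ∧ d ≤ a ∧ d ≤ b) := by omega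
  rcases this with ⟨x, y, z⟩ | ⟨x, y, z⟩ | ⟨x, y, z⟩ | ⟨x, y, z⟩
  · exact C4_aux2 q a b c d hq hb hc hd x y z hcd h1 h2 h3 h4 h6
  · exact C4_aux2 q b a c d hq ha hc hd x y z hcd h3 h4 h1 h2 h6
  · exact C4_aux2 q c d a b hq hd ha hb x y z hab h1.symm h3.symm h2.symm h4.symm h5
  · exact C4_aux2 q d c a b hq hc ha hb x y z hab h2.symm h4.symm h1.symm h3.symm h5

theorem KM_free (q : ℕ) (hq : 2 ≤ q) : TwoK2Free (KMbar q)ᶜ := by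
  rintro ⟨a, b, c, d, hab, hcd, hac, had, hbc, hbd⟩
  have e1 : a ≠ c := by rintro rfl; exact had hcd
  have e2 : a ≠ d := by rintro rfl; exact hac hcd.symm
  have e3 : b ≠ c := by rintro rfl; exact hbd hcd
  have e4 : b ≠ d := by rintro rfl; exact hbc hcd.symm
  rw [Ne, Fin.ext_iff] at e1 e2 e3 e4
  rw [KMc_adj q hq] at *
  exact C4_free q a b c d hq a.2 b.2 c.2 d.2 hab.1 hcd.1
    (by_contra fun h => hac ⟨e1, h⟩) (by_contra fun h => had ⟨e2, h⟩)
    (by_contra fun h => hbc ⟨e3, h⟩) (by_contra fun h => hbd ⟨e4, h⟩) hab.2 hcd.2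

/-- the 2q-colouring -/
def c1 (q a : ℕ) : ℕ :=
  if q + 2 ≤ a then (a - q - 2) / 3 else if a ≤ 1 then q else if q ≤ a then q + 1 else q + a

/-- the frozen colouring -/
def c2 (q a : ℕ) : ℕ :=
  if a ≤ q then a else if (a - q) % 3 = 0 then (a - q) / 3 else if a = 4*q+1 then 0
  else q + 1 + (a - q) / 3

set_option maxHeartbeats 4000000 in
theorem c1_RR (q a b : ℕ) (hq : 2 ≤ q) (hb : b < 4*q+2) (hab : a < b)
    (he : c1 q a = c1 q b) : RR q a b := by
  unfold RR
  unfold c1 at he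
  split_ifs at he <;> omega

set_option maxHeartbeats 4000000 in
theorem c2_RR (q a b : ℕ) (hq : 2 ≤ q) (hb : b < 4*q+2) (hab : a < b)
    (he : c2 q a = c2 q b) : RR q a b := by
  unfold RR
  unfold c2 at he
  split_ifs at he <;> omega

theorem KM_col1 (q : ℕ) (hq : 2 ≤ q) : (KMbar q)ᶜ.Colorable (2*q) := by
  refine ⟨SimpleGraph.Coloring.mk (fun a => ⟨c1 q a, ?_⟩) ?_⟩
  · have := a.2
    unfold c1; split_ifs <;> omega
  · intro a b h
    rw [KMc_adj q hq] at h
    obtain ⟨h0, h⟩ := h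
    have ha := a.2
    have hb := b.2
    rw [Ne, Fin.ext_iff]
    show ¬ (c1 q a = c1 q b)
    intro he
    rcases lt_or_gt_of_ne h0 with hl | hl
    · exact h (Or.inl (c1_RR q a b hq hb hl he))
    · exact h (Or.inr (c1_RR q b a hq ha hl he.symm))

theorem KM_chrom (q : ℕ) (hq : 2 ≤ q) :
    ((KMbar q)ᶜ).chromaticNumber = ((2*q : ℕ) : ℕ∞) := by
  apply le_antisymm (KM_col1 q hq).chromaticNumber_le
  let f : Fin (2*q) → Fin (4*q+2) := fun k =>
    ⟨if k.val < q then k.val + 1 else q + 2 + 3 * (k.val - q), by have := k.2; split_ifs <;> omega⟩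
  have hf : Function.Injective f := by
    intro k l h
    have hk := k.2
    have hl := l.2
    simp only [f, Fin.mk.injEq] at h
    rw [Fin.ext_iff]
    split_ifs at h <;> omega
  have hcl : (KMbar q)ᶜ.IsClique ((Finset.univ.image f : Finset _) : Set (Fin (4*q+2))) := by
    intro x hx y hy hxy
    simp only [Finset.coe_image, Finset.coe_univ, Set.image_univ, Set.mem_range] at hx hy
    obtain ⟨k, rfl⟩ := hx
    obtain ⟨l, rfl⟩ := hy
    have hk := k.2
    have hl := l.2
    rw [KMc_adj q hq]
    refine ⟨fun h => hxy (Fin.ext h), ?_⟩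
    unfold RR
    simp only [f]
    split_ifs <;> omega
  have := hcl.card_le_chromaticNumber
  rwa [Finset.card_image_of_injective _ hf, Finset.card_univ, Fintype.card_fin] at this

theorem frozen_aux (q v j : ℕ) (hq : 2 ≤ q) (hv : v < 4*q+2) (hj : j < 2*q+1) (h : j ≠ c2 q v) :
    ∃ w, w < 4*q+2 ∧ (v ≠ w ∧ ¬ (RR q v w ∨ RR q w v)) ∧ c2 q w = j := by
  obtain ⟨x, y, hx, hy, hxj, hyj, hn⟩ : ∃ x y, x < 4*q+2 ∧ y < 4*q+2 ∧ c2 q x = j ∧ c2 q y = j ∧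
      ((RR q v x ∨ RR q x v) → (RR q v y ∨ RR q y v) → False) := by
    have hs : j = 0 ∨ (1 ≤ j ∧ j ≤ q) ∨ q + 1 ≤ j := by omega
    rcases hs with hs | hs | hs
    · refine ⟨0, 4*q+1, by omega, by omega, ?_, ?_, ?_⟩
      · unfold c2; split_ifs <;> omega
      · unfold c2; split_ifs <;> omega
      · unfold RR; omega
    · refine ⟨j, q + 3*j, by omega, by omega, ?_, ?_, ?_⟩
      · unfold c2; split_ifs <;> omega
      · unfold c2; split_ifs <;> omega
      · unfold RR; omega
    · refine ⟨q + 3*(j-q-1)+1, q + 3*(j-q-1)+2, by omega, by omega, ?_, ?_, ?_⟩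
      · unfold c2; split_ifs <;> omega
      · unfold c2; split_ifs <;> omega
      · unfold RR; omega
  by_cases h1 : RR q v x ∨ RR q x v
  · exact ⟨y, hy, ⟨by rintro rfl; exact h hyj.symm, fun h2 => hn h1 h2⟩, hyj⟩
  · exact ⟨x, hx, ⟨by rintro rfl; exact h hxj.symm, h1⟩, hxj⟩

theorem KM_frozen (q : ℕ) (hq : 2 ≤ q) :
    ∃ C : ((KMbar q)ᶜ).Coloring (Fin (2*q+1)), IsFrozenColoring (KMbar q)ᶜ C := by
  have hlt : ∀ a : Fin (4*q+2), c2 q a < 2*q+1 := by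
    intro a
    have := a.2
    unfold c2; split_ifs <;> omega
  refine ⟨SimpleGraph.Coloring.mk (fun a => ⟨c2 q a, hlt a⟩) ?_, ?_⟩
  · intro a b h
    rw [KMc_adj q hq] at h
    obtain ⟨h0, h⟩ := h
    have ha := a.2
    have hb := b.2
    rw [Ne, Fin.ext_iff]
    show ¬ (c2 q a = c2 q b)
    intro he
    rcases lt_or_gt_of_ne h0 with hl | hl
    · exact h (Or.inl (c2_RR q a b hq hb hl he))
    · exact h (Or.inr (c2_RR q b a hq ha hl he.symm))
  · intro v j hj
    obtain ⟨w, hw, h1, h2⟩ := frozen_aux q v j hq v.2 j.2 (fun h => hj (Fin.ext h))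
    exact ⟨⟨w, hw⟩, (KMc_adj q hq _ _).2 h1, Fin.ext h2⟩

theorem stmt15 : ∀ q : ℕ, 2 ≤ q →
    ((KMbar q)ᶜ).chromaticNumber = ((2*q : ℕ) : ℕ∞) ∧
    TwoK2Free (KMbar q)ᶜ ∧
    ∃ C : ((KMbar q)ᶜ).Coloring (Fin (2*q+1)), IsFrozenColoring (KMbar q)ᶜ C := by
  intro q hq
  exact ⟨KM_chrom q hq, KM_free q hq, KM_frozen q hq⟩
end
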